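/- arXiv:1311.1193 — 2 statements merged into one kernel-verified Lean document; each statement's English description precedes it below -/
import Mathlib

section
/- Let p be a prime number. The abelian group Ext¹_ℤ(ℤ[1/p], ℤ), i.e. the first Ext group of ℤ[1/p] by ℤ in the category of abelian groups (ℤ-modules), is isomorphic to the quotient group ℤ_p/ℤ, where ℤ_p is the additive group of p-adic integers and ℤ is embedded in ℤ_p via the canonical ring homomorphism. -/
open scoped Real

/-- The additive subgroup `ℤ[1/p]` of `ℚ` of `p`-adic rationals. -/
def pAdicRat (p : ℕ) : AddSubgroup ℚ where
  carrier := {r : ℚ | ∃ (z : ℤ) (k : ℕ), r * (p : ℚ) ^ k = z}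
  zero_mem' := ⟨0, 0, by simp⟩
  add_mem' := by
    rintro a b ⟨z1, k1, h1⟩ ⟨z2, k2, h2⟩
    refine ⟨z1 * (p : ℤ) ^ k2 + z2 * (p : ℤ) ^ k1, k1 + k2, ?_⟩
    push_cast
    calc (a + b) * (p : ℚ) ^ (k1 + k2)
        = (a * (p : ℚ) ^ k1) * (p : ℚ) ^ k2 + (b * (p : ℚ) ^ k2) * (p : ℚ) ^ k1 := by
          rw [pow_add]; ring
      _ = (z1 : ℚ) * (p : ℚ) ^ k2 + (z2 : ℚ) * (p : ℚ) ^ k1 := by rw [h1, h2]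
  neg_mem' := by
    rintro a ⟨z, k, h⟩
    exact ⟨-z, k, by push_cast; rw [neg_mul, h]⟩

open CategoryTheory

/-!
The localization `R[1/x]` is the colimit of the telescope `R → R → ⋯` of multiplications by `x`, so
it has a free resolution of length one, and `Ext¹(R[1/x], N)` is the group of sequences `a` in `N`
modulo those of the form `aₙ = bₙ - x bₙ₊₁`. If `N` embeds in an `x`-adically complete module `C`,
the equation `aₙ = bₙ - x bₙ₊₁` has a unique solution `b` in `C`, given by `bₙ = ∑ₖ xᵏ aₙ₊ₖ`. The
sequence `a` is trivial in `Ext¹` exactly when `b` takes values in `N`. Modulo `N` the sequence `b`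
satisfies `bₙ = x bₙ₊₁`, so when `x` acts bijectively on `C / N` it is determined by the class of
`b₀ = ∑ xᵏ aₖ`, which can be any element of `C / N`. For `x = p` and `N = ℤ ⊆ C = ℤ_p`, bijectivity
means that `ℤ_p = ℤ + p ℤ_p` and `ℤ ∩ p ℤ_p = p ℤ`.
-/

open Limits

section ShortExactResolution

variable {C : Type*} [Category* C] [Abelian C] {S : ShortComplex C}

/-- The chain complex `⋯ ⟶ 0 ⟶ S.X₁ ⟶ S.X₂` of a short complex `S`, ending in degree `0`. It is
built by augmenting a single complex, so that its terms in degrees `0` and `1` are `S.X₂` and `S.X₁`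
definitionally. -/
noncomputable def twoTermComplex (S : ShortComplex C) : ChainComplex C ℕ :=
  ((ChainComplex.single₀ C).obj S.X₁).augment S.f (by
    rw [HomologicalComplex.single_obj_d]; exact zero_comp)

theorem twoTermComplex_isZero_X (S : ShortComplex C) (n : ℕ) :
    IsZero ((twoTermComplex S).X (n + 2)) :=
  HomologicalComplex.isZero_single_obj_X (ComplexShape.down ℕ) 0 S.X₁ (n + 1) (by simp)

theorem twoTermComplex_projective [Projective S.X₁] [Projective S.X₂] :
    ∀ n, Projective ((twoTermComplex S).X n)
  | 0 => inferInstanceAs (Projective S.X₂)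
  | 1 => inferInstanceAs (Projective S.X₁)
  | n + 2 => (twoTermComplex_isZero_X S n).projective

theorem twoTermComplex_exactAt_succ [Mono S.f] (n : ℕ) : (twoTermComplex S).ExactAt (n + 1) := by
  rw [HomologicalComplex.exactAt_iff' _ (n + 2) (n + 1) n (by simp) (by simp)]
  match n with
  | 0 =>
    rw [ShortComplex.exact_iff_mono _ ((twoTermComplex_isZero_X S 0).eq_of_src _ _)]
    exact inferInstanceAs (Mono S.f)
  | n + 1 => exact ShortComplex.exact_of_isZero_X₂ _ (twoTermComplex_isZero_X S n)

/-- The augmentation of `twoTermComplex S` given by `S.g : S.X₂ ⟶ S.X₃`. -/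
noncomputable def twoTermComplexAugmentation (S : ShortComplex C) :
    twoTermComplex S ⟶ (ChainComplex.single₀ C).obj S.X₃ :=
  (ChainComplex.toSingle₀Equiv _ _).symm ⟨S.g, S.zero⟩

theorem twoTermComplexAugmentation_f_zero (S : ShortComplex C) :
    (twoTermComplexAugmentation S).f 0 = S.g :=
  ChainComplex.toSingle₀Equiv_symm_apply_f_zero _ _

theorem quasiIso_twoTermComplexAugmentation (hS : S.ShortExact) :
    QuasiIso (twoTermComplexAugmentation S) where
  quasiIsoAt
    | 0 => by
      rw [ChainComplex.quasiIsoAt₀_iff, ShortComplex.quasiIso_iff_of_zeros' _ rfl rfl rfl]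
      refine (ShortComplex.exact_and_epi_g_iff_of_iso ?_).2 ⟨hS.exact, hS.epi_g⟩
      exact ShortComplex.isoMk (Iso.refl S.X₁) (Iso.refl S.X₂) (Iso.refl S.X₃)
        ((Category.id_comp _).trans (Category.comp_id _).symm)
        ((Category.id_comp _).trans ((twoTermComplexAugmentation_f_zero S).symm.trans
          (Category.comp_id _).symm))
    | n + 1 => by
      have := hS.mono_f
      rw [quasiIsoAt_iff_exactAt' _ _ (ChainComplex.exactAt_succ_single_obj _ _)]
      exact twoTermComplex_exactAt_succ n

/-- A short exact sequence `0 ⟶ P₁ ⟶ P₀ ⟶ X ⟶ 0` with `P₁` and `P₀` projective, viewed as a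
projective resolution of `X`. -/
noncomputable def projectiveResolutionOfShortExact (hS : S.ShortExact) [Projective S.X₁]
    [Projective S.X₂] : ProjectiveResolution S.X₃ :=
  .mk (twoTermComplex S) twoTermComplex_projective (twoTermComplexAugmentation S)
    (quasiIso_twoTermComplexAugmentation hS)

/-- The computation of `Ext¹(X, Y)` as the cokernel of `Hom(P₀, Y) → Hom(P₁, Y)` for a short exact
sequence `0 ⟶ P₁ ⟶ P₀ ⟶ X ⟶ 0` with `P₁` and `P₀` projective. -/
noncomputable def extOneEquivOfShortExact (R : Type*) [Ring R] [Linear R C] [EnoughProjectives C]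
    (hS : S.ShortExact) [Projective S.X₁] [Projective S.X₂] (Y : C) :
    ((Ext R C 1).obj (Opposite.op S.X₃)).obj Y ≃ₗ[R]
      (S.X₁ ⟶ Y) ⧸ (Linear.leftComp R Y S.f).range :=
  let K := (twoTermComplex S).linearYonedaObj R Y
  have d_eq_zero : K.d 1 2 = 0 := by
    ext φ
    exact (twoTermComplex_isZero_X S 0).eq_of_src _ _
  ((projectiveResolutionOfShortExact hS).isoExt 1 Y ≪≫
    K.homologyIsoSc' 0 1 2 (by simp) (by simp) ≪≫
    (K.sc' 0 1 2).asIsoHomologyι d_eq_zero ≪≫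
    (K.sc' 0 1 2).moduleCatOpcyclesIso).toLinearEquiv

end ShortExactResolution

section Telescope

universe u

variable {R : Type u} [CommRing R] (x : R)

/-- The endomorphism `e_n ↦ e_n - x • e_{n+1}` of `⨁ₙ R`. Its cokernel is the colimit of the
telescope `R → R → ⋯` of multiplications by `x`, that is `R[1/x]`. -/
noncomputable def telescope : (ℕ →₀ R) →ₗ[R] (ℕ →₀ R) :=
  LinearMap.id - x • Finsupp.lmapDomain R R Nat.succ

theorem telescope_single (n : ℕ) (r : R) :
    telescope x (.single n r) = .single n r - .single (n + 1) (x * r) := by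
  simp [telescope]

theorem telescope_apply_zero (c : ℕ →₀ R) : telescope x c 0 = c 0 := by
  simp [telescope, Finsupp.mapDomain_of_notMem_range]

theorem telescope_apply_succ (c : ℕ →₀ R) (n : ℕ) :
    telescope x c (n + 1) = c (n + 1) - x * c n := by
  simp [telescope, Finsupp.mapDomain_apply Nat.succ_injective]

theorem telescope_injective : Function.Injective (telescope x) := by
  rw [injective_iff_map_eq_zero]
  intro c hc
  ext n
  induction n with
  | zero => rw [← telescope_apply_zero x, hc]
  | succ n ih => simpa [hc, ih] using (telescope_apply_succ x c n).symm

theorem single_sub_single_add_mem_range_telescope (n k : ℕ) (r : R) :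
    Finsupp.single n r - .single (n + k) (x ^ k * r) ∈ (telescope x).range := by
  induction k with
  | zero => simp
  | succ k ih =>
    convert add_mem ih ⟨.single (n + k) (x ^ k * r), telescope_single x _ _⟩ using 1
    rw [sub_add_sub_cancel, pow_succ', mul_assoc, add_assoc]

theorem exists_sub_single_mem_range_telescope (c : ℕ →₀ R) :
    ∃ n r, c - .single n r ∈ (telescope x).range := by
  induction c using Finsupp.induction_linear with
  | zero => exact ⟨0, 0, by simp⟩
  | single n r => exact ⟨n, r, by simp⟩
  | add c c' hc hc' =>
    obtain ⟨n, r, hc⟩ := hc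
    obtain ⟨n', r', hc'⟩ := hc'
    refine ⟨n + n', x ^ n' * r + x ^ n * r', ?_⟩
    have hr := single_sub_single_add_mem_range_telescope x n n' r
    have hr' := single_sub_single_add_mem_range_telescope x n' n r'
    rw [add_comm n' n] at hr'
    convert add_mem (add_mem hc hr) (add_mem hc' hr') using 1
    rw [Finsupp.single_add]
    abel

section Augmentation

variable {M : Type u} [AddCommGroup M] [Module R M] (f : R →ₗ[R] M) [IsLocalizedModule.Away x f]

/-- The map `⨁ₙ R → R[1/x]`, `e_n ↦ 1 / xⁿ`, where the localization is given as
`f : R →ₗ[R] M`. -/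
noncomputable def telescopeAugmentation : (ℕ →₀ R) →ₗ[R] M :=
  Finsupp.linearCombination R fun n ↦
    IsLocalizedModule.mk' f 1 (⟨x ^ n, n, rfl⟩ : Submonoid.powers x)

theorem telescopeAugmentation_single (n : ℕ) (r : R) :
    telescopeAugmentation x f (.single n r) =
      IsLocalizedModule.mk' f r (⟨x ^ n, n, rfl⟩ : Submonoid.powers x) := by
  simp [telescopeAugmentation, ← IsLocalizedModule.mk'_smul]

theorem telescopeAugmentation_surjective :
    Function.Surjective (telescopeAugmentation x f) := by
  intro m
  obtain ⟨⟨r, _, n, rfl⟩, rfl⟩ := IsLocalizedModule.mk'_surjective (.powers x) f m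
  exact ⟨.single n r, telescopeAugmentation_single x f n r⟩

theorem telescopeAugmentation_comp_telescope :
    telescopeAugmentation x f ∘ₗ telescope x = 0 := by
  refine Finsupp.lhom_ext fun n r ↦ ?_
  rw [LinearMap.comp_apply, telescope_single, map_sub, telescopeAugmentation_single,
    telescopeAugmentation_single, LinearMap.zero_apply, sub_eq_zero,
    IsLocalizedModule.mk'_eq_mk'_iff]
  exact ⟨1, by simp [Submonoid.smul_def, pow_succ, mul_assoc]⟩

theorem exact_telescope_telescopeAugmentation :
    Function.Exact (telescope x) (telescopeAugmentation x f) := by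
  have map_range {c} (hc : c ∈ (telescope x).range) : telescopeAugmentation x f c = 0 := by
    obtain ⟨d, rfl⟩ := hc
    exact LinearMap.congr_fun (telescopeAugmentation_comp_telescope x f) d
  refine fun c ↦ ⟨fun hc ↦ ?_, map_range⟩
  obtain ⟨n, r, hcr⟩ := exists_sub_single_mem_range_telescope x c
  have hr : telescopeAugmentation x f (.single n r) = 0 := by
    simpa [hc] using map_range hcr
  obtain ⟨⟨_, k, rfl⟩, hk : x ^ k * r = 0⟩ :=
    (IsLocalizedModule.mk'_eq_zero' f _).1 ((telescopeAugmentation_single x f n r).symm.trans hr)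
  simpa [hk] using add_mem hcr (single_sub_single_add_mem_range_telescope x n k r)

theorem shortExact_telescope :
    (ShortComplex.mk (ModuleCat.ofHom (telescope x)) (ModuleCat.ofHom (telescopeAugmentation x f))
      (ModuleCat.hom_ext (telescopeAugmentation_comp_telescope x f))).ShortExact where
  exact := (ShortComplex.ShortExact.moduleCat_exact_iff_function_exact _).2
    (exact_telescope_telescopeAugmentation x f)
  mono_f := (ModuleCat.mono_iff_injective _).2 (telescope_injective x)
  epi_g := (ModuleCat.epi_iff_surjective _).2 (telescopeAugmentation_surjective x f)

end Augmentation

section Cotelescope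

variable (N : Type*) [AddCommGroup N] [Module R N]

/-- The endomorphism `b ↦ (b_n - x • b_{n+1})ₙ` of `∏ₙ N`, the `N`-dual of `telescope x`. Its
cokernel is `lim¹` of the tower `⋯ → N → N` of multiplications by `x`. -/
def cotelescope : (ℕ → N) →ₗ[R] (ℕ → N) :=
  LinearMap.id - x • LinearMap.funLeft R N Nat.succ

variable {N}

theorem cotelescope_apply (b : ℕ → N) (n : ℕ) : cotelescope x N b n = b n - x • b (n + 1) := rfl

theorem map_cotelescope {C : Type*} [AddCommGroup C] [Module R C] (g : N →ₗ[R] C) (b : ℕ → N) :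
    g.compLeft ℕ (cotelescope x N b) = cotelescope x C (g.compLeft ℕ b) := by
  ext n
  simp [cotelescope_apply]

theorem llift_cotelescope (b : ℕ → N) :
    Finsupp.llift N R R ℕ (cotelescope x N b) = Finsupp.llift N R R ℕ b ∘ₗ telescope x := by
  refine Finsupp.lhom_ext fun n r ↦ ?_
  rw [LinearMap.comp_apply, telescope_single, map_sub]
  simp [cotelescope_apply, smul_sub, mul_smul, smul_comm x r, -Finsupp.single_mul]

theorem exists_cotelescope_eq_zero (hx : Function.Surjective fun c : N ↦ x • c) (c : N) :
    ∃ b, cotelescope x N b = 0 ∧ b 0 = c := by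
  refine ⟨fun n ↦ (Function.surjInv hx)^[n] c, ?_, rfl⟩
  ext n
  rw [cotelescope_apply, Function.iterate_succ_apply', Pi.zero_apply, sub_eq_zero]
  exact (Function.surjInv_eq hx _).symm

theorem eq_zero_of_cotelescope_eq_zero (hx : Function.Injective fun c : N ↦ x • c) {b : ℕ → N}
    (hb : cotelescope x N b = 0) (hb₀ : b 0 = 0) : b = 0 := by
  ext n
  induction n with
  | zero => exact hb₀
  | succ n ih =>
    refine hx ?_
    have := congrFun hb n
    simpa [cotelescope_apply, ih] using this

theorem smodEq_span_singleton_pow_smul_top {y z : N} {n : ℕ} :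
    y ≡ z [SMOD (Ideal.span {x} ^ n • ⊤ : Submodule R N)] ↔ ∃ w, x ^ n • w = y - z := by
  simp [SModEq.sub_mem, Ideal.span_singleton_pow, Submodule.ideal_span_singleton_smul,
    Submodule.mem_smul_pointwise_iff_exists]

theorem cotelescope_injective [IsHausdorff (Ideal.span {x}) N] :
    Function.Injective (cotelescope x N) := by
  rw [injective_iff_map_eq_zero]
  intro b hb
  have eq_pow_smul (n k : ℕ) : x ^ k • b (n + k) = b n := by
    induction k with
    | zero => simp
    | succ k ih =>
      have hbk : b (n + k) = x • b (n + k + 1) := sub_eq_zero.1 (congrFun hb (n + k))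
      rw [← ih, pow_succ, mul_smul, ← add_assoc, ← hbk]
  ext n
  refine IsHausdorff.haus ‹_› _ fun k ↦ (smodEq_span_singleton_pow_smul_top x).2 ⟨b (n + k), ?_⟩
  rw [eq_pow_smul, sub_zero]

/-- The preimage of `a` is the sequence of the series `∑ₖ xᵏ • a_{n+k}`. -/
theorem cotelescope_surjective [IsAdicComplete (Ideal.span {x}) N] :
    Function.Surjective (cotelescope x N) := by
  intro a
  let s (n K : ℕ) : N := ∑ k ∈ Finset.range K, x ^ k • a (n + k)
  have s_succ (n K : ℕ) : s n (K + 1) = a n + x • s (n + 1) K := by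
    simp [s, Finset.sum_range_succ', Finset.smul_sum, smul_smul, pow_succ', add_comm, add_left_comm]
  have s_cauchy (n : ℕ) {K L : ℕ} (hKL : K ≤ L) :
      s n K ≡ s n L [SMOD (Ideal.span {x} ^ K • ⊤ : Submodule R N)] := by
    obtain ⟨j, rfl⟩ := Nat.exists_eq_add_of_le hKL
    refine ((smodEq_span_singleton_pow_smul_top x).2 ⟨s (n + K) j, ?_⟩).symm
    simp [s, Finset.sum_range_add, Finset.smul_sum, smul_smul, pow_add, add_assoc]
  choose b hb using fun n ↦ IsPrecomplete.prec (I := Ideal.span {x}) inferInstance (s_cauchy n)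
  refine ⟨b, funext fun n ↦ (IsHausdorff.eq_iff_smodEq (I := Ideal.span {x})).2 fun K ↦ ?_⟩
  have hs : s n (K + 1) - x • s (n + 1) K = a n := sub_eq_of_eq_add (s_succ n K)
  have hsb : s n (K + 1) ≡ b n [SMOD (Ideal.span {x} ^ K • ⊤ : Submodule R N)] :=
    (s_cauchy n K.le_succ).symm.trans (hb n K)
  simpa [cotelescope_apply, hs] using (hsb.sub ((hb (n + 1) K).smul x)).symm

end Cotelescope

section Completion

variable {x} {N C Q : Type*} [AddCommGroup N] [Module R N] [AddCommGroup C] [Module R C]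
  [AddCommGroup Q] [Module R Q] [IsAdicComplete (Ideal.span {x}) C]

variable (x) in
/-- The map `a ↦ q (∑ₙ xⁿ • g (a_n))`, the series being summed in the `x`-adically complete
module `C`. -/
noncomputable def seriesClass (g : N →ₗ[R] C) (q : C →ₗ[R] Q) : (ℕ → N) →ₗ[R] Q :=
  q ∘ₗ LinearMap.proj 0 ∘ₗ
    (LinearEquiv.ofBijective (cotelescope x C)
      ⟨cotelescope_injective x, cotelescope_surjective x⟩).symm.toLinearMap ∘ₗ g.compLeft ℕ

theorem seriesClass_apply_of_cotelescope_eq {g : N →ₗ[R] C} (q : C →ₗ[R] Q) {a : ℕ → N} {y : ℕ → C}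
    (hy : cotelescope x C y = g.compLeft ℕ a) : seriesClass x g q a = q (y 0) := by
  have := (LinearEquiv.symm_apply_eq (LinearEquiv.ofBijective (cotelescope x C)
    ⟨cotelescope_injective x, cotelescope_surjective x⟩)).2 hy.symm
  simp [seriesClass, this]

theorem seriesClass_surjective {g : N →ₗ[R] C} {q : C →ₗ[R] Q} (hgq : Function.Exact g q)
    (hq : Function.Surjective q) (hx : Function.Surjective fun c : Q ↦ x • c) :
    Function.Surjective (seriesClass x g q) := by
  intro c
  obtain ⟨z, hz, rfl⟩ := exists_cotelescope_eq_zero x hx c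
  choose y hy using fun n ↦ hq (z n)
  have hyz : q.compLeft ℕ y = z := funext hy
  have q_cotelescope (n : ℕ) : q (cotelescope x C y n) = 0 := by
    rw [← hyz, ← map_cotelescope] at hz
    exact congrFun hz n
  choose a ha using fun n ↦ (hgq _).1 (q_cotelescope n)
  exact ⟨a, (seriesClass_apply_of_cotelescope_eq q (funext ha).symm).trans (hy 0)⟩

theorem exact_cotelescope_seriesClass {g : N →ₗ[R] C} {q : C →ₗ[R] Q} (hg : Function.Injective g)
    (hgq : Function.Exact g q) (hx : Function.Injective fun c : Q ↦ x • c) :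
    Function.Exact (cotelescope x N) (seriesClass x g q) := by
  intro a
  constructor
  · intro ha
    obtain ⟨y, hy⟩ := cotelescope_surjective x (g.compLeft ℕ a)
    have hqy : q.compLeft ℕ y = 0 := by
      refine eq_zero_of_cotelescope_eq_zero x hx ?_
        ((seriesClass_apply_of_cotelescope_eq q hy).symm.trans ha)
      rw [← map_cotelescope, hy]
      exact funext fun n ↦ hgq.apply_apply_eq_zero (a n)
    choose b hb using fun n ↦ (hgq _).1 (congrFun hqy n)
    obtain rfl : g.compLeft ℕ b = y := funext hb
    exact ⟨b, hg.comp_left ((map_cotelescope x g b).trans hy)⟩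
  · rintro ⟨b, rfl⟩
    rw [seriesClass_apply_of_cotelescope_eq q (map_cotelescope x g b).symm]
    exact hgq.apply_apply_eq_zero (b 0)

end Completion

section Ext

/-- Sequences in `N` as morphisms `⨁ₙ R ⟶ N` in `ModuleCat R`. -/
noncomputable def seqEquivHom (N : Type u) [AddCommGroup N] [Module R N] :
    (ℕ → N) ≃ₗ[R] (ModuleCat.of R (ℕ →₀ R) ⟶ ModuleCat.of R N) :=
  Finsupp.llift N R R ℕ ≪≫ₗ
    (ModuleCat.homLinearEquiv (M := ModuleCat.of R (ℕ →₀ R)) (N := ModuleCat.of R N)).symm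

theorem map_seqEquivHom_range_cotelescope (N : Type u) [AddCommGroup N] [Module R N] :
    (cotelescope x N).range.map (seqEquivHom N).toLinearMap =
      (Linear.leftComp R (ModuleCat.of R N) (ModuleCat.ofHom (telescope x))).range := by
  have comm : (seqEquivHom N).toLinearMap ∘ₗ cotelescope x N =
      Linear.leftComp R (ModuleCat.of R N) (ModuleCat.ofHom (telescope x)) ∘ₗ
        (seqEquivHom N).toLinearMap :=
    LinearMap.ext fun b ↦ ModuleCat.hom_ext (llift_cotelescope x b)
  rw [← LinearMap.range_comp, comm, LinearMap.range_comp_of_range_eq_top _ (seqEquivHom N).range]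

/-- The isomorphism `Ext¹(R[1/x], N) ≃ lim¹ (⋯ → N → N)`, all the transition maps being
multiplication by `x`. -/
noncomputable def extOneEquivCotelescope {M : Type u} [AddCommGroup M] [Module R M] (f : R →ₗ[R] M)
    [IsLocalizedModule.Away x f] (N : Type u) [AddCommGroup N] [Module R N] :
    ((Ext R (ModuleCat R) 1).obj (Opposite.op (ModuleCat.of R M))).obj (ModuleCat.of R N) ≃ₗ[R]
      (ℕ → N) ⧸ (cotelescope x N).range :=
  extOneEquivOfShortExact R (shortExact_telescope x f) (ModuleCat.of R N) ≪≫ₗ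
    (Submodule.Quotient.equiv _ _ (seqEquivHom N) (map_seqEquivHom_range_cotelescope x N)).symm

/-- Typically `C` is the `x`-adic completion of `N` and `Q = C / N`. -/
theorem ext_pAdicRat_int_general {M N : Type u} {C Q : Type*} [AddCommGroup M] [Module R M]
    [AddCommGroup N] [Module R N] [AddCommGroup C] [Module R C] [AddCommGroup Q] [Module R Q]
    (f : R →ₗ[R] M) [IsLocalizedModule.Away x f] [IsAdicComplete (Ideal.span {x}) C]
    {g : N →ₗ[R] C} {q : C →ₗ[R] Q} (hg : Function.Injective g) (hgq : Function.Exact g q)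
    (hq : Function.Surjective q) (hx : Function.Bijective fun c : Q ↦ x • c) :
    Nonempty (((Ext R (ModuleCat R) 1).obj (Opposite.op (ModuleCat.of R M))).obj
      (ModuleCat.of R N) ≃ₗ[R] Q) :=
  ⟨extOneEquivCotelescope x f N ≪≫ₗ
    (exact_cotelescope_seriesClass hg hgq hx.1).linearEquivOfSurjective
      (seriesClass_surjective hgq hq hx.2)⟩

end Ext

end Telescope

section PadicRationals

theorem pAdicRat.isUnit_algebraMap (p : ℕ) [NeZero p] :
    IsUnit (algebraMap ℤ (Module.End ℤ (pAdicRat p)) p) := by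
  have hp : (p : ℚ) ≠ 0 := NeZero.ne _
  rw [Module.End.isUnit_iff]
  constructor
  · intro a b hab
    have hab : (p : ℚ) * a = p * b := by simpa using congrArg Subtype.val hab
    exact Subtype.ext (mul_left_cancel₀ hp hab)
  · rintro ⟨r, z, k, h⟩
    refine ⟨⟨r / p, z, k + 1, ?_⟩, Subtype.ext ?_⟩
    · rw [← h, pow_succ']
      field_simp
    · simpa using mul_div_cancel₀ r hp

/-- The inclusion `ℤ → ℤ[1/p]`. -/
def pAdicRat.ofInt (p : ℕ) : ℤ →ₗ[ℤ] pAdicRat p :=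
  LinearMap.toSpanSingleton ℤ _ ⟨1, 1, 0, by simp⟩

instance pAdicRat.isLocalizedModule_away (p : ℕ) [NeZero p] :
    IsLocalizedModule.Away (p : ℤ) (pAdicRat.ofInt p) := by
  refine .mk_of_addCommGroup (pAdicRat.isUnit_algebraMap p) ?_ ?_
  · rintro ⟨r, z, k, h⟩
    refine ⟨k, z, Subtype.ext ?_⟩
    simp [pAdicRat.ofInt, ← h, mul_comm]
  · intro z hz
    refine ⟨0, ?_⟩
    simpa [pAdicRat.ofInt, Subtype.ext_iff] using hz

end PadicRationals

section PadicIntegers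

variable (p : ℕ) [Fact p.Prime]

instance isAdicComplete_padicInt_span_int : IsAdicComplete (Ideal.span {(p : ℤ)}) ℤ_[p] := by
  have h : (Ideal.span {(p : ℤ)}).map (algebraMap ℤ ℤ_[p]) = IsLocalRing.maximalIdeal ℤ_[p] := by
    simp [Ideal.map_span, PadicInt.maximalIdeal_eq_span_p]
  have : IsAdicComplete ((Ideal.span {(p : ℤ)}).map (algebraMap ℤ ℤ_[p])) ℤ_[p] :=
    h ▸ inferInstance
  exact { toIsHausdorff := IsHausdorff.map_algebraMap_iff.1 this.toIsHausdorff
          toIsPrecomplete := IsPrecomplete.map_algebraMap_iff.1 this.toIsPrecomplete }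

theorem exact_intCast_mk_padicInt :
    Function.Exact (Int.castAddHom ℤ_[p]).toIntLinearMap
      (QuotientAddGroup.mk' (Int.castAddHom ℤ_[p]).range).toIntLinearMap :=
  fun y ↦ QuotientAddGroup.eq_zero_iff y

variable {p}

theorem exists_padicInt_eq_intCast_add_mul (y : ℤ_[p]) : ∃ (m : ℤ) (z : ℤ_[p]), y = m + p * z := by
  obtain ⟨z, hz⟩ := (PadicInt.norm_lt_one_iff_dvd _).1 (PadicInt.norm_sub_zmodRepr_lt_one y)
  exact ⟨y.zmodRepr, z, by simp [← hz]⟩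

theorem exists_intCast_eq_of_mul_eq_intCast {y : ℤ_[p]} {m : ℤ} (h : p * y = m) :
    ∃ n : ℤ, (n : ℤ_[p]) = y := by
  obtain ⟨n, rfl⟩ : (p : ℤ) ∣ m := by
    simpa using (PadicInt.pow_p_dvd_int_iff 1 m).1 ⟨y, by simp [h]⟩
  have hp : (p : ℤ_[p]) ≠ 0 := NeZero.ne _
  exact ⟨n, mul_left_cancel₀ hp (by simpa using h.symm)⟩

variable (p)

theorem bijective_smul_padicInt_quotient_int :
    Function.Bijective fun c : ℤ_[p] ⧸ (Int.castAddHom ℤ_[p]).range ↦ (p : ℤ) • c := by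
  constructor
  · refine (injective_iff_map_eq_zero
      (DistribSMul.toAddMonoidHom (ℤ_[p] ⧸ (Int.castAddHom ℤ_[p]).range) (p : ℤ))).2 fun c hc ↦ ?_
    obtain ⟨y, rfl⟩ := QuotientAddGroup.mk_surjective c
    obtain ⟨m, hm : (m : ℤ_[p]) = (p : ℤ) • y⟩ := (QuotientAddGroup.eq_zero_iff _).1 hc
    exact (QuotientAddGroup.eq_zero_iff y).2
      (exists_intCast_eq_of_mul_eq_intCast (by simpa using hm.symm))
  · intro c
    obtain ⟨y, rfl⟩ := QuotientAddGroup.mk_surjective c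
    obtain ⟨m, z, rfl⟩ := exists_padicInt_eq_intCast_add_mul y
    exact ⟨QuotientAddGroup.mk z, QuotientAddGroup.eq.2 ⟨m, by simp⟩⟩

end PadicIntegers

/-- For `p` prime, the abelian group `Ext¹_ℤ(ℤ[1/p], ℤ)` is isomorphic to
`ℤ_p/ℤ`, the additive group of `p`-adic integers modulo the canonically embedded copy of
the integers. -/
theorem ext_pAdicRat_int (p : ℕ) [Fact p.Prime] :
    Nonempty
      ((((Ext ℤ (ModuleCat ℤ) 1).obj
          (Opposite.op (ModuleCat.of ℤ (pAdicRat p)))).obj (ModuleCat.of ℤ ℤ)) ≃+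
        (ℤ_[p] ⧸ (Int.castAddHom ℤ_[p]).range)) :=
  (ext_pAdicRat_int_general (p : ℤ) (pAdicRat.ofInt p) Int.cast_injective
    (exact_intCast_mk_padicInt p) (QuotientAddGroup.mk'_surjective _)
    (bijective_smul_padicInt_quotient_int p)).map LinearEquiv.toAddEquiv
end

section
/- Let p be a prime number. The map (x,r) ↦ χ_{(x,r)}, where χ_{(x,r)}(q,t) = exp(2πi·{x·q}_p)·exp(2πi·r·t) for (q,t) ∈ ℚ_p × ℝ, is an isomorphism of topological groups from ℚ_p × ℝ onto the Pontryagin dual of ℚ_p × ℝ (the group of continuous homomorphisms ℚ_p × ℝ → 𝕋 with the compact-open topology); in particular, ℚ_p × ℝ is self-dual. -/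
open scoped Real

/-!
Let `ψ` be a continuous character of a locally compact, σ-compact ring `R` such that every
continuous character of `R` is `x ↦ ψ (a * x)` for exactly one `a`. Then `a ↦ ψ (a * ·)` is a
continuous isomorphism onto the Pontryagin dual, hence a homeomorphism by the open mapping theorem.
Products of such characters have the same property, so it suffices to treat `exp (2πi x)` on `ℝ`
and `exp (2πi {x}_p)` on `ℚ_p`.

A character of `ℝ` lifts along the covering `ℝ → 𝕋` to a continuous additive, hence linear, map.

A character `χ` of `ℚ_p` satisfies `χ (p ^ n) = 1` for some `n`, because `𝕋` has no small subgroups;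
after rescaling, `n = 0`. Then `χ (p ^ -k)` is a power of the primitive `p ^ k`-th root of unity
`ψ (p ^ -k)`, so the `a ∈ ℤ_p` with `ψ (a p ^ -k) = χ (p ^ -k)` form a decreasing sequence of
nonempty compact sets, and any `a` in their intersection represents `χ`.
-/

section SelfDualizing

variable {R S : Type*} [CommRing R] [TopologicalSpace R] [CommRing S] [TopologicalSpace S]

/-- A continuous unitary character `ψ` of the additive group of a topological ring is
*self-dualizing* if every continuous unitary character is `x ↦ ψ (a * x)` for exactly one `a`;
uniqueness is expressed by Mathlib's `AddChar.IsPrimitive`. -/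
structure IsSelfDualizing (ψ : AddChar R Circle) : Prop where
  continuous : Continuous ψ
  isPrimitive : ψ.IsPrimitive
  exists_mulShift_eq : ∀ χ : AddChar R Circle, Continuous χ → ∃ a, ψ.mulShift a = χ

/-- The homomorphism `a ↦ (x ↦ ψ (a * x))` from a topological ring to its Pontryagin dual, in the
multiplicative notation that Mathlib's continuous homomorphisms require. -/
noncomputable def mulShiftHom [ContinuousMul R] (ψ : AddChar R Circle) (hψ : Continuous ψ) :
    Multiplicative R →* (Multiplicative R →ₜ* Circle) where
  toFun a :=
    { toMonoidHom := (ψ.mulShift a.toAdd).toMonoidHom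
      continuous_toFun := hψ.comp (continuous_const.mul continuous_toAdd) }
  map_one' := ContinuousMonoidHom.ext fun x ↦ DFunLike.congr_fun ψ.mulShift_zero x.toAdd
  map_mul' a b :=
    ContinuousMonoidHom.ext fun x ↦
      (DFunLike.congr_fun (ψ.mulShift_mul a.toAdd b.toAdd) x.toAdd).symm

lemma continuous_mulShiftHom [ContinuousMul R] {ψ : AddChar R Circle} (hψ : Continuous ψ) :
    Continuous (mulShiftHom ψ hψ) :=
  ContinuousMonoidHom.continuous_of_continuous_uncurry _ <|
    hψ.comp ((continuous_toAdd.comp continuous_fst).mul (continuous_toAdd.comp continuous_snd))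

namespace IsSelfDualizing

variable {ψ : AddChar R Circle}

lemma bijective_mulShiftHom [ContinuousMul R] (hψ : IsSelfDualizing ψ) :
    Function.Bijective (mulShiftHom ψ hψ.continuous) := by
  refine ⟨fun a b hab ↦ ?_, fun χ ↦ ?_⟩
  · refine Multiplicative.toAdd.injective <|
      AddChar.to_mulShift_inj_of_isPrimitive hψ.isPrimitive <| AddChar.ext _ _ fun x ↦ ?_
    exact DFunLike.congr_fun hab (.ofAdd x)
  · obtain ⟨a, ha⟩ := hψ.exists_mulShift_eq (AddChar.toMonoidHomEquiv.symm χ.toMonoidHom)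
      (χ.continuous_toFun.comp continuous_ofAdd)
    exact ⟨.ofAdd a, ContinuousMonoidHom.ext fun x ↦ DFunLike.congr_fun ha x.toAdd⟩

lemma isOpenMap_mulShiftHom [IsTopologicalRing R] [LocallyCompactSpace R] [SigmaCompactSpace R]
    (hψ : IsSelfDualizing ψ) : IsOpenMap (mulShiftHom ψ hψ.continuous) :=
  have : SigmaCompactSpace (Multiplicative R) := ‹SigmaCompactSpace R›
  have : LocallyCompactSpace (Multiplicative R) := ‹LocallyCompactSpace R›
  have : LocallyCompactSpace (Multiplicative R →ₜ* Circle) :=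
    inferInstanceAs (LocallyCompactSpace (PontryaginDual (Multiplicative R)))
  MonoidHom.isOpenMap_of_sigmaCompact _ hψ.bijective_mulShiftHom.surjective
    (continuous_mulShiftHom hψ.continuous)

/-- The isomorphism of topological groups from a locally compact, σ-compact ring onto its
Pontryagin dual given by a self-dualizing character. -/
noncomputable def dualEquiv [IsTopologicalRing R] [LocallyCompactSpace R] [SigmaCompactSpace R]
    (hψ : IsSelfDualizing ψ) : Multiplicative R ≃ₜ* (Multiplicative R →ₜ* Circle) :=
  .mk' ((Equiv.ofBijective _ hψ.bijective_mulShiftHom).toHomeomorphOfContinuousOpen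
    (continuous_mulShiftHom hψ.continuous) hψ.isOpenMap_mulShiftHom)
    (map_mul (mulShiftHom ψ hψ.continuous))

@[simp]
lemma dualEquiv_apply_apply [IsTopologicalRing R] [LocallyCompactSpace R] [SigmaCompactSpace R]
    (hψ : IsSelfDualizing ψ) (a x : Multiplicative R) :
    hψ.dualEquiv a x = ψ (a.toAdd * x.toAdd) :=
  rfl

end IsSelfDualizing

/-- The character `(x, y) ↦ ψ x * φ y` of a product. -/
def prodAddChar {A B M : Type*} [AddMonoid A] [AddMonoid B] [CommMonoid M]
    (ψ : AddChar A M) (φ : AddChar B M) : AddChar (A × B) M :=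
  ψ.compAddMonoidHom (.fst A B) * φ.compAddMonoidHom (.snd A B)

@[simp]
lemma prodAddChar_apply {A B M : Type*} [AddMonoid A] [AddMonoid B] [CommMonoid M]
    (ψ : AddChar A M) (φ : AddChar B M) (x : A × B) :
    prodAddChar ψ φ x = ψ x.1 * φ x.2 :=
  rfl

lemma isPrimitive_prodAddChar {R S M : Type*} [CommRing R] [CommRing S] [CommMonoid M]
    {ψ : AddChar R M} {φ : AddChar S M} (hψ : ψ.IsPrimitive) (hφ : φ.IsPrimitive) :
    (prodAddChar ψ φ).IsPrimitive := by
  rintro ⟨a, b⟩ hab h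
  have hψa : ψ.mulShift a = 1 :=
    AddChar.ext _ _ fun x ↦ by simpa using DFunLike.congr_fun h (x, (0 : S))
  have hφb : φ.mulShift b = 1 :=
    AddChar.ext _ _ fun y ↦ by simpa using DFunLike.congr_fun h ((0 : R), y)
  refine hab (Prod.ext ?_ ?_)
  · exact not_not.mp fun ha ↦ hψ ha hψa
  · exact not_not.mp fun hb ↦ hφ hb hφb

lemma IsSelfDualizing.prod {ψ : AddChar R Circle} {φ : AddChar S Circle}
    (hψ : IsSelfDualizing ψ) (hφ : IsSelfDualizing φ) :
    IsSelfDualizing (prodAddChar ψ φ) where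
  continuous := (hψ.continuous.comp continuous_fst).mul (hφ.continuous.comp continuous_snd)
  isPrimitive := isPrimitive_prodAddChar hψ.isPrimitive hφ.isPrimitive
  exists_mulShift_eq χ hχ := by
    obtain ⟨a, ha⟩ := hψ.exists_mulShift_eq (χ.compAddMonoidHom (.inl R S))
      (hχ.comp (.prodMk_left 0))
    obtain ⟨b, hb⟩ := hφ.exists_mulShift_eq (χ.compAddMonoidHom (.inr R S))
      (hχ.comp (.prodMk_right 0))
    refine ⟨(a, b), AddChar.ext _ _ fun ⟨x, y⟩ ↦ ?_⟩
    calc ψ (a * x) * φ (b * y)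
        = χ (x, 0) * χ (0, y) :=
          congr_arg₂ _ (DFunLike.congr_fun ha x) (DFunLike.congr_fun hb y)
      _ = χ (x, y) := by simp [← AddChar.map_add_eq_mul]

end SelfDualizing

section Real

lemma fourierChar_eq_one_iff {x : ℝ} : Real.fourierChar x = 1 ↔ ∃ n : ℤ, x = n := by
  rw [Real.fourierChar_apply', Circle.exp_eq_one]
  refine exists_congr fun n ↦ ?_
  rw [mul_comm, mul_left_inj' Real.two_pi_pos.ne']

lemma exists_continuous_addMonoidHom_exp_eq {A : Type*} [AddGroup A] [TopologicalSpace A]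
    [ContinuousAdd A] [SimplyConnectedSpace A] [LocallyPathConnectedSpace A]
    {χ : AddChar A Circle} (hχ : Continuous χ) :
    ∃ θ : A →+ ℝ, Continuous θ ∧ ∀ t, Circle.exp (θ t) = χ t := by
  obtain ⟨θ, ⟨hθ_zero, hθ⟩, -⟩ :=
    Circle.isCoveringMap_exp.existsUnique_continuousMap_lifts ⟨χ, hχ⟩ 0 0 (by simp)
  have hexp (t : A) : Circle.exp (θ t) = χ t := congr_fun hθ t
  have hadd (s t : A) : θ (s + t) = θ s + θ t := by
    refine congr_fun (Circle.isCoveringMap_exp.eq_of_comp_eq (g₁ := fun t ↦ θ (s + t))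
      (g₂ := fun t ↦ θ s + θ t) (by fun_prop) (by fun_prop) (funext fun t ↦ ?_) 0
      (by simp [hθ_zero])) t
    simp only [Function.comp_apply, hexp, Circle.exp_add, AddChar.map_add_eq_mul]
  exact ⟨.mk' θ hadd, θ.continuous, hexp⟩

theorem isSelfDualizing_fourierChar : IsSelfDualizing Real.fourierChar where
  continuous := Real.continuous_fourierChar
  isPrimitive := .of_ne_one Real.fourierChar_ne_one
  exists_mulShift_eq χ hχ := by
    obtain ⟨θ, hθ, hexp⟩ := exists_continuous_addMonoidHom_exp_eq hχ
    refine ⟨θ 1 / (2 * π), AddChar.ext _ _ fun t ↦ ?_⟩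
    have hlin : θ t = t * θ 1 := by simpa using map_real_smul θ hθ t 1
    rw [AddChar.mulShift_apply, Real.fourierChar_apply', ← hexp, hlin]
    congr 1
    field

end Real

section NoSmallSubgroups

lemma addChar_eq_one_of_forall_mem_centeredArc {A : Type*} [AddMonoid A] {χ : AddChar A Circle}
    {H : AddSubmonoid A} (h : ∀ x ∈ H, χ x ∈ Circle.centeredArc (π / 2)) {x : A} (hx : x ∈ H) :
    χ x = 1 :=
  Circle.eq_one_of_forall_pow_mem_centeredArc_pi_div_two fun n _ ↦ by
    simpa [AddChar.map_nsmul_eq_pow] using h _ (nsmul_mem hx n)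

lemma exists_openAddSubgroup_forall_addChar_eq_one {A : Type*} [AddGroup A] [TopologicalSpace A]
    [NonarchimedeanAddGroup A] {χ : AddChar A Circle} (hχ : Continuous χ) :
    ∃ V : OpenAddSubgroup A, ∀ x ∈ V, χ x = 1 := by
  have harc : Circle.centeredArc (π / 2) ∈ nhds (χ 0) := by
    refine (Circle.isOpen_centeredArc _).mem_nhds ?_
    rw [χ.map_zero_eq_one, Circle.mem_centeredArc (half_le_self Real.pi_nonneg)]
    simp [Real.pi_pos]
  obtain ⟨V, hV⟩ := NonarchimedeanAddGroup.is_nonarchimedean _ (hχ.continuousAt harc)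
  exact ⟨V, fun x hx ↦
    addChar_eq_one_of_forall_mem_centeredArc (H := V.toAddSubmonoid) (fun _ h ↦ hV h) hx⟩

end NoSmallSubgroups

section Padic

variable {p : ℕ} [Fact p.Prime]

lemma exists_pow_mul_eq_padicInt (x : ℚ_[p]) :
    ∃ (k : ℕ) (u : ℤ_[p]), (p : ℚ_[p]) ^ k * x = u := by
  have hp : (1 : ℝ) < p := mod_cast (Fact.out : p.Prime).one_lt
  obtain ⟨k, hk⟩ := pow_unbounded_of_one_lt ‖x‖ hp
  refine ⟨k, ⟨(p : ℚ_[p]) ^ k * x, ?_⟩, rfl⟩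
  rw [norm_mul, Padic.norm_p_pow, zpow_neg, zpow_natCast]
  exact inv_mul_le_one_of_le₀ hk.le (by positivity)

lemma padicAddChar_ext_of_forall_pow_inv {M : Type*} [Monoid M] [TopologicalSpace M] [T2Space M]
    {χ ψ : AddChar ℚ_[p] M} (hχ : Continuous χ) (hψ : Continuous ψ)
    (h : ∀ k : ℕ, χ ((p : ℚ_[p]) ^ k)⁻¹ = ψ ((p : ℚ_[p]) ^ k)⁻¹) : χ = ψ := by
  have hp : (p : ℚ_[p]) ≠ 0 := mod_cast (Fact.out : p.Prime).ne_zero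
  refine AddChar.ext _ _ fun x ↦ ?_
  obtain ⟨k, u, hu⟩ := exists_pow_mul_eq_padicInt x
  let scale : ℤ_[p] →+ ℚ_[p] :=
    (AddMonoidHom.mulLeft ((p : ℚ_[p]) ^ k)⁻¹).comp PadicInt.Coe.ringHom.toAddMonoidHom
  have hscale_apply (v : ℤ_[p]) : scale v = ((p : ℚ_[p]) ^ k)⁻¹ * v := rfl
  have hscale : Continuous scale := continuous_const.mul continuous_subtype_val
  have heq : χ.compAddMonoidHom scale = ψ.compAddMonoidHom scale :=
    PadicInt.denseRange_natCast.addChar_eq_of_eval_one_eq (hχ.comp hscale) (hψ.comp hscale)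
      (by simpa [hscale_apply] using h k)
  have hx : scale u = x := by simp [hscale_apply, ← hu, hp]
  simpa [hx] using DFunLike.congr_fun heq u

lemma exists_addChar_pow_eq_one {χ : AddChar ℚ_[p] Circle} (hχ : Continuous χ) :
    ∃ n : ℕ, χ ((p : ℚ_[p]) ^ n) = 1 := by
  obtain ⟨V, hV⟩ := exists_openAddSubgroup_forall_addChar_eq_one hχ
  have hpow := tendsto_pow_atTop_nhds_zero_of_norm_lt_one (Padic.norm_p_lt_one (p := p))
  obtain ⟨n, hn⟩ := (hpow.eventually V.mem_nhds_zero).exists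
  exact ⟨n, hV _ hn⟩

section UnitBallKernel

variable {ψ : AddChar ℚ_[p] Circle} (hψ : ∀ x, ψ x = 1 ↔ ‖x‖ ≤ 1)
include hψ

lemma continuous_of_forall_eq_one_iff_norm_le_one : Continuous ψ := by
  have hone : ψ.toMonoidHom =ᶠ[nhds 1] fun _ ↦ 1 :=
    Filter.mem_of_superset (Metric.closedBall_mem_nhds (0 : ℚ_[p]) one_pos)
      fun x hx ↦ (hψ x).2 (mem_closedBall_zero_iff.1 hx)
  have hcont : Continuous ψ.toMonoidHom :=
    continuous_of_continuousAt_one _ (continuousAt_const.congr hone.symm)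
  exact hcont.comp continuous_ofAdd

lemma isPrimitiveRoot_addChar_pow_inv (k : ℕ) :
    IsPrimitiveRoot (ψ ((p : ℚ_[p]) ^ k)⁻¹) (p ^ k) := by
  have hp : (0 : ℝ) < p := mod_cast (Fact.out : p.Prime).pos
  have hpow (l : ℕ) : ψ ((p : ℚ_[p]) ^ k)⁻¹ ^ l = 1 ↔ p ^ k ∣ l := by
    rw [← ψ.map_nsmul_eq_pow, hψ, nsmul_eq_mul, norm_mul, norm_inv, Padic.norm_p_pow,
      ← div_eq_mul_inv, div_le_one (by positivity), ← Int.cast_natCast,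
      Padic.norm_int_le_pow_iff_dvd]
    exact_mod_cast Iff.rfl
  exact ⟨(hpow _).2 dvd_rfl, fun l ↦ (hpow l).1⟩

lemma exists_nat_addChar_mul_pow_inv_eq {χ : AddChar ℚ_[p] Circle} (hχ : χ 1 = 1) (k : ℕ) :
    ∃ m : ℕ, ψ (m * ((p : ℚ_[p]) ^ k)⁻¹) = χ ((p : ℚ_[p]) ^ k)⁻¹ := by
  have hp : (p : ℚ_[p]) ≠ 0 := mod_cast (Fact.out : p.Prime).ne_zero
  have : NeZero (p ^ k) := ⟨pow_ne_zero k (Fact.out : p.Prime).ne_zero⟩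
  have hroot : χ ((p : ℚ_[p]) ^ k)⁻¹ ^ p ^ k = 1 := by
    rw [← χ.map_nsmul_eq_pow, nsmul_eq_mul, Nat.cast_pow, mul_inv_cancel₀ (pow_ne_zero k hp), hχ]
  obtain ⟨m, -, hm⟩ :=
    ((isPrimitiveRoot_addChar_pow_inv hψ k).map_of_injective (f := Circle.coeHom)
      Circle.coe_injective).eq_pow_of_pow_eq_one (congr_arg Circle.coeHom hroot)
  refine ⟨m, Circle.coe_injective ?_⟩
  rw [← nsmul_eq_mul, ψ.map_nsmul_eq_pow]
  exact hm

lemma exists_padicInt_forall_addChar_mul_pow_inv_eq {χ : AddChar ℚ_[p] Circle} (hχ : χ 1 = 1) :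
    ∃ a : ℤ_[p], ∀ k : ℕ, ψ (a * ((p : ℚ_[p]) ^ k)⁻¹) = χ ((p : ℚ_[p]) ^ k)⁻¹ := by
  have hp : (p : ℚ_[p]) ≠ 0 := mod_cast (Fact.out : p.Prime).ne_zero
  let S (k : ℕ) : Set ℤ_[p] := {a | ψ (a * ((p : ℚ_[p]) ^ k)⁻¹) = χ ((p : ℚ_[p]) ^ k)⁻¹}
  have hclosed (k : ℕ) : IsClosed (S k) :=
    isClosed_eq ((continuous_of_forall_eq_one_iff_norm_le_one hψ).comp
      (continuous_subtype_val.mul continuous_const)) continuous_const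
  have hanti (k : ℕ) : S (k + 1) ⊆ S k := by
    intro a (ha : ψ _ = χ _)
    have hpow : ((p : ℚ_[p]) ^ k)⁻¹ = p • ((p : ℚ_[p]) ^ (k + 1))⁻¹ := by
      rw [nsmul_eq_mul, pow_succ]
      field
    change ψ _ = χ _
    rw [hpow, mul_smul_comm, ψ.map_nsmul_eq_pow, χ.map_nsmul_eq_pow, ha]
  have hne (k : ℕ) : (S k).Nonempty :=
    (exists_nat_addChar_mul_pow_inv_eq hψ hχ k).imp' (fun m : ℕ ↦ (m : ℤ_[p])) fun m hm ↦ by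
      simpa [S] using hm
  obtain ⟨a, ha⟩ := IsCompact.nonempty_iInter_of_sequence_nonempty_isCompact_isClosed S hanti hne
    (hclosed 0).isCompact hclosed
  exact ⟨a, Set.mem_iInter.1 ha⟩

theorem isSelfDualizing_of_forall_eq_one_iff_norm_le_one : IsSelfDualizing ψ where
  continuous := continuous_of_forall_eq_one_iff_norm_le_one hψ
  isPrimitive := by
    refine .of_ne_one (AddChar.ne_one_iff.2 ⟨(p : ℚ_[p])⁻¹, fun h ↦ ?_⟩)
    have hp : (1 : ℝ) < p := mod_cast (Fact.out : p.Prime).one_lt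
    rw [hψ, norm_inv, Padic.norm_p, inv_inv] at h
    exact hp.not_ge h
  exists_mulShift_eq χ hχ := by
    have hp : (p : ℚ_[p]) ≠ 0 := mod_cast (Fact.out : p.Prime).ne_zero
    have hψ_cont : Continuous ψ := continuous_of_forall_eq_one_iff_norm_le_one hψ
    obtain ⟨n, hn⟩ := exists_addChar_pow_eq_one hχ
    obtain ⟨a, ha⟩ := exists_padicInt_forall_addChar_mul_pow_inv_eq hψ
      (χ := χ.mulShift ((p : ℚ_[p]) ^ n)) (by simpa using hn)
    have hmulShift : ψ.mulShift a = χ.mulShift ((p : ℚ_[p]) ^ n) :=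
      padicAddChar_ext_of_forall_pow_inv (hψ_cont.comp (continuous_const_mul _))
        (hχ.comp (continuous_const_mul _)) ha
    refine ⟨a * ((p : ℚ_[p]) ^ n)⁻¹, ?_⟩
    rw [← AddChar.mulShift_mulShift, hmulShift, AddChar.mulShift_mulShift,
      mul_inv_cancel₀ (pow_ne_zero n hp), AddChar.mulShift_one]

end UnitBallKernel

lemma exists_eq_intCast_of_mem_pAdicRat {r : ℚ} (hr : r ∈ pAdicRat p) (h : ‖(r : ℚ_[p])‖ ≤ 1) :
    ∃ n : ℤ, r = n := by
  obtain ⟨z, k, hz⟩ := hr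
  have hp : (p : ℚ) ^ k ≠ 0 := pow_ne_zero k (mod_cast (Fact.out : p.Prime).ne_zero)
  have hz_norm : ‖(z : ℚ_[p])‖ ≤ (p : ℝ) ^ (-k : ℤ) := by
    have hz_padic : (r : ℚ_[p]) * (p : ℚ_[p]) ^ k = z :=
      mod_cast congr_arg (Rat.cast : ℚ → ℚ_[p]) hz
    rw [← hz_padic, norm_mul, Padic.norm_p_pow]
    exact mul_le_of_le_one_left (by positivity) h
  obtain ⟨m, rfl⟩ := (Padic.norm_int_le_pow_iff_dvd z k).1 hz_norm
  refine ⟨m, mul_right_cancel₀ hp ?_⟩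
  rw [hz, mul_comm]
  push_cast
  rfl

lemma exists_mem_pAdicRat_norm_sub_le_one (x : ℚ_[p]) :
    ∃ r ∈ pAdicRat p, ‖x - (r : ℚ_[p])‖ ≤ 1 := by
  have hp : (0 : ℝ) < p := mod_cast (Fact.out : p.Prime).pos
  have hp_rat : (p : ℚ) ≠ 0 := mod_cast (Fact.out : p.Prime).ne_zero
  have hp_padic : (p : ℚ_[p]) ≠ 0 := mod_cast (Fact.out : p.Prime).ne_zero
  obtain ⟨k, u, hu⟩ := exists_pow_mul_eq_padicInt x
  refine ⟨u.appr k / (p : ℚ) ^ k, ⟨u.appr k, k, by simp [hp_rat]⟩, ?_⟩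
  have hnorm : ‖(u : ℚ_[p]) - u.appr k‖ ≤ (p : ℝ) ^ (-k : ℤ) :=
    mod_cast ((u - u.appr k).norm_le_pow_iff_mem_span_pow k).2 (u.appr_spec k)
  have hx : x - ((u.appr k / (p : ℚ) ^ k : ℚ) : ℚ_[p]) = (u - u.appr k) / (p : ℚ_[p]) ^ k := by
    rw [← hu]
    push_cast
    field
  rwa [hx, norm_div, Padic.norm_p_pow, div_le_one (by positivity)]

lemma fourierChar_ratCast_eq_one_iff {r : ℚ} (hr : r ∈ pAdicRat p) :
    Real.fourierChar r = 1 ↔ ‖(r : ℚ_[p])‖ ≤ 1 := by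
  rw [fourierChar_eq_one_iff]
  refine ⟨fun ⟨n, hn⟩ ↦ ?_, fun h ↦ ?_⟩
  · obtain rfl : r = n := mod_cast hn
    exact_mod_cast Padic.norm_int_le_one n
  · obtain ⟨n, rfl⟩ := exists_eq_intCast_of_mem_pAdicRat hr h
    exact ⟨n, Rat.cast_intCast n⟩

lemma fourierChar_ratCast_congr {r s : ℚ} (hr : r ∈ pAdicRat p) (hs : s ∈ pAdicRat p)
    (h : ‖(r - s : ℚ_[p])‖ ≤ 1) : Real.fourierChar r = Real.fourierChar s := by
  rw [← div_eq_one, ← AddChar.map_sub_eq_div, ← Rat.cast_sub,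
    fourierChar_ratCast_eq_one_iff (sub_mem hr hs), Rat.cast_sub]
  exact h

variable (p) in
/-- The standard character `x ↦ exp (2πi {x}_p)` of `ℚ_p`. Any `r ∈ ℤ[1/p]` with `x - r ∈ ℤ_p` may
serve as the fractional part `{x}_p`, since two such `r` differ by an integer. -/
noncomputable def padicFourierChar : AddChar ℚ_[p] Circle where
  toFun x := Real.fourierChar (exists_mem_pAdicRat_norm_sub_le_one x).choose
  map_zero_eq_one' := by
    obtain ⟨hr, hnorm⟩ := (exists_mem_pAdicRat_norm_sub_le_one (0 : ℚ_[p])).choose_spec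
    exact (fourierChar_ratCast_eq_one_iff hr).2 (by simpa using hnorm)
  map_add_eq_mul' x y := by
    obtain ⟨hr, hxr⟩ := (exists_mem_pAdicRat_norm_sub_le_one x).choose_spec
    obtain ⟨hs, hys⟩ := (exists_mem_pAdicRat_norm_sub_le_one y).choose_spec
    obtain ⟨ht, hxyt⟩ := (exists_mem_pAdicRat_norm_sub_le_one (x + y)).choose_spec
    generalize (exists_mem_pAdicRat_norm_sub_le_one x).choose = r at *
    generalize (exists_mem_pAdicRat_norm_sub_le_one y).choose = s at *
    generalize (exists_mem_pAdicRat_norm_sub_le_one (x + y)).choose = t at *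
    rw [← AddChar.map_add_eq_mul, ← Rat.cast_add]
    refine fourierChar_ratCast_congr ht (add_mem hr hs) ?_
    have hsplit : (t : ℚ_[p]) - (r + s : ℚ) = (x - r + (y - s)) - (x + y - t) := by
      push_cast
      ring
    rw [hsplit]
    exact (PadicInt.subring p).sub_mem ((PadicInt.subring p).add_mem hxr hys) hxyt

lemma padicFourierChar_eq_fourierChar {x : ℚ_[p]} {r : ℚ} (hr : r ∈ pAdicRat p)
    (hxr : ‖x - (r : ℚ_[p])‖ ≤ 1) : padicFourierChar p x = Real.fourierChar r := by
  obtain ⟨hs, hxs⟩ := (exists_mem_pAdicRat_norm_sub_le_one x).choose_spec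
  refine fourierChar_ratCast_congr hs hr ?_
  rw [← sub_sub_sub_cancel_left _ _ x]
  exact (PadicInt.subring p).sub_mem hxr hxs

lemma padicFourierChar_eq_one_iff {x : ℚ_[p]} : padicFourierChar p x = 1 ↔ ‖x‖ ≤ 1 := by
  obtain ⟨r, hr, hxr⟩ := exists_mem_pAdicRat_norm_sub_le_one x
  rw [padicFourierChar_eq_fourierChar hr hxr, fourierChar_ratCast_eq_one_iff hr]
  refine ⟨fun h ↦ ?_, fun h ↦ ?_⟩
  · simpa [PadicInt.mem_subring_iff] using (PadicInt.subring p).add_mem hxr h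
  · simpa [PadicInt.mem_subring_iff] using (PadicInt.subring p).sub_mem h hxr

theorem isSelfDualizing_padicFourierChar : IsSelfDualizing (padicFourierChar p) :=
  isSelfDualizing_of_forall_eq_one_iff_norm_le_one fun _ ↦ padicFourierChar_eq_one_iff

end Padic

/-- For `p` prime, with `{·}_p : ℚ_p → ℤ[1/p]` the `p`-adic fractional part,
the map `(x,r) ↦ χ_{(x,r)}`, where `χ_{(x,r)}(q,t) = exp(2πi {xq}_p) exp(2πi rt)`, is an
isomorphism of topological groups from `ℚ_p × ℝ` onto its Pontryagin dual (the group of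
continuous homomorphisms `ℚ_p × ℝ → 𝕋` with the compact-open topology); in particular
`ℚ_p × ℝ` is self-dual. -/
theorem padic_real_self_dual (p : ℕ) [Fact p.Prime]
    (frac : ℚ_[p] → ℚ)
    (hfrac : ∀ x : ℚ_[p], frac x ∈ pAdicRat p ∧ 0 ≤ frac x ∧ frac x < 1 ∧
      ‖x - ((frac x : ℚ) : ℚ_[p])‖ ≤ 1) :
    ∃ Φ : (ℚ_[p] × ℝ) ≃ ContinuousMonoidHom (Multiplicative (ℚ_[p] × ℝ)) Circle,
      (∀ (x q : ℚ_[p]) (r t : ℝ),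
        Φ (x, r) (Multiplicative.ofAdd ((q, t) : ℚ_[p] × ℝ)) =
          Circle.exp (2 * π * ((frac (x * q) : ℝ))) * Circle.exp (2 * π * (r * t))) ∧
      (∀ a b : ℚ_[p] × ℝ, Φ (a + b) = Φ a * Φ b) ∧
      Continuous Φ ∧ Continuous Φ.symm := by
  have hψ : IsSelfDualizing (prodAddChar (padicFourierChar p) Real.fourierChar) :=
    isSelfDualizing_padicFourierChar.prod isSelfDualizing_fourierChar
  refine ⟨Multiplicative.ofAdd.trans hψ.dualEquiv.toEquiv, fun x q r t ↦ ?_, fun a b ↦ ?_,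
    hψ.dualEquiv.continuous.comp continuous_ofAdd,
    continuous_toAdd.comp hψ.dualEquiv.symm.continuous⟩
  · obtain ⟨hmem, -, -, hnorm⟩ := hfrac (x * q)
    refine (hψ.dualEquiv_apply_apply (.ofAdd (x, r)) (.ofAdd (q, t))).trans ?_
    rw [toAdd_ofAdd, toAdd_ofAdd, Prod.mk_mul_mk, prodAddChar_apply,
      padicFourierChar_eq_fourierChar hmem hnorm, Real.fourierChar_apply',
      Real.fourierChar_apply']
  · exact hψ.dualEquiv.toMulEquiv.map_mul (.ofAdd a) (.ofAdd b)
end
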